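/- Let (a_k) be a sequence of real numbers such that the power series Σ a_k z^k has infinite radius of convergence, let c ∈ ℝ, and let u(t) = Σ_{k=0}^∞ a_k (t-c)^k for all t ∈ ℝ. Let σ, τ ∈ ℝ, p ∈ ℕ, and set d = σ - c - τ. Then for every k ∈ ℕ the series Σ_{y=k+p}^∞ binom(y, k+p) d^{y-k-p} a_y converges absolutely, and for all t ∈ ℝ: u^{(p)}(t-τ) = Σ_{k=0}^∞ ((k+p)!/k!) (Σ_{y=k+p}^∞ binom(y, k+p) d^{y-k-p} a_y) (t-σ)^k. That is, the Taylor coefficients of t ↦ u^{(p)}(t-τ) at σ are ((k+p)!/k!) Σ_{y=k+p}^∞ binom(y,k+p)(σ-c-τ)^{y-k-p} a_y. -/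

import Mathlib

theorem aux_double (a : ℕ → ℝ) (ha : ∀ x : ℝ, Summable (fun k : ℕ => a k * x ^ k)) (d s : ℝ) :
    Summable (fun q : ℕ × ℕ => ((q.2 + q.1).choose q.1 : ℝ) * d ^ q.2 * a (q.2 + q.1) * s ^ q.1) := by
  apply Summable.of_norm
  rw [← (Finset.HasAntidiagonal.sigmaAntidiagonalEquivProd (A := ℕ)).summable_iff]
  refine (summable_sigma_of_nonneg (fun _ => norm_nonneg _)).2 ?_
  refine ⟨fun n => Summable.of_finite, ?_⟩
  refine ((ha (|s| + |d|)).norm).congr fun n => ?_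
  rw [tsum_fintype]
  have h0 : 0 ≤ |s| + |d| := by positivity
  rw [norm_mul, norm_pow, Real.norm_of_nonneg h0, (Commute.all |s| |d|).add_pow', Finset.mul_sum,
    Finset.univ_eq_attach,
    ← Finset.sum_attach]
  refine Finset.sum_congr rfl fun q _ => ?_
  obtain ⟨⟨i, j⟩, hq⟩ := q
  have : i + j = n := by simpa using hq
  subst this
  simp [Finset.HasAntidiagonal.sigmaAntidiagonalEquivProd, abs_mul, abs_pow, add_comm j i]
  ring

theorem aux_recenter (a : ℕ → ℝ) (ha : ∀ x : ℝ, Summable (fun k : ℕ => a k * x ^ k)) (d s : ℝ) :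
    HasSum (fun k : ℕ => (∑' m : ℕ, ((m + k).choose k : ℝ) * d ^ m * a (m + k)) * s ^ k)
      (∑' k, a k * (s + d) ^ k) := by
  have hS := aux_double a ha d s
  have h1 := hS.hasSum.prod_fiberwise (fun k => (hS.prod_factor k).hasSum)
  simp only [tsum_mul_right] at h1
  convert h1 using 1
  rw [← (Finset.HasAntidiagonal.sigmaAntidiagonalEquivProd (A := ℕ)).tsum_eq]
  have h2 := (Finset.HasAntidiagonal.sigmaAntidiagonalEquivProd (A := ℕ)).summable_iff.2 hS
  refine Eq.trans ?_ (Summable.tsum_sigma' (fun n => Summable.of_finite) h2).symm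
  refine tsum_congr fun n => ?_
  rw [tsum_fintype, (Commute.all s d).add_pow', Finset.mul_sum, Finset.univ_eq_attach,
    ← Finset.sum_attach]
  refine Finset.sum_congr rfl fun q _ => ?_
  obtain ⟨⟨i, j⟩, hq⟩ := q
  have : i + j = n := by simpa using hq
  subst this
  simp [Finset.HasAntidiagonal.sigmaAntidiagonalEquivProd, add_comm j i]
  ring

theorem aux_inner (a : ℕ → ℝ) (ha : ∀ x : ℝ, Summable (fun k : ℕ => a k * x ^ k)) (d : ℝ) (k : ℕ) :
    Summable (fun m : ℕ => ((m + k).choose k : ℝ) * d ^ m * a (m + k)) := by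
  simpa using (aux_double a ha d 1).prod_factor k

theorem aux_deriv (b : ℕ → ℝ) (e : ℝ) (v : ℝ → ℝ)
    (hv : ∀ t : ℝ, HasSum (fun k : ℕ => b k * (t - e) ^ k) (v t)) (x : ℝ) :
    HasSum (fun k : ℕ => ((k + 1 : ℕ) : ℝ) * b (k + 1) * (x - e) ^ k) (deriv v x) := by
  have hb : ∀ x : ℝ, Summable (fun k : ℕ => b k * x ^ k) := fun x => by
    simpa using (hv (x + e)).summable
  have hF : HasFPowerSeriesAt v (FormalMultilinearSeries.ofScalars ℝ
      (fun k : ℕ => ∑' m : ℕ, ((m + k).choose k : ℝ) * (x - e) ^ m * b (m + k))) x := by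
    rw [hasFPowerSeriesAt_iff]
    refine Filter.Eventually.of_forall fun s => ?_
    have h := aux_recenter b hb (x - e) s
    have h3 : ∑' k, b k * (s + (x - e)) ^ k = v (x + s) := by
      rw [← (hv (x + s)).tsum_eq]
      refine tsum_congr fun k => ?_
      ring
    rw [h3] at h
    simpa [mul_comm] using h
  have h4 := (aux_inner b hb (x - e) 1).hasSum
  rw [hF.deriv]
  simp only [Nat.choose_one_right] at h4
  convert h4 using 1
  · funext k; ring
  · simp [FormalMultilinearSeries.ofScalars]

theorem aux_iter (p : ℕ) : ∀ (b : ℕ → ℝ) (e : ℝ) (v : ℝ → ℝ)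
    (_ : ∀ t : ℝ, HasSum (fun k : ℕ => b k * (t - e) ^ k) (v t)) (x : ℝ),
    HasSum (fun k : ℕ => ((k + p).factorial : ℝ) / (k.factorial : ℝ) * b (k + p) * (x - e) ^ k)
      (iteratedDeriv p v x) := by
  induction p with
  | zero =>
    intro b e v hv x
    have h : ∀ k : ℕ, (k.factorial : ℝ) ≠ 0 := fun k => by positivity
    simpa [h] using hv x
  | succ p ih =>
    intro b e v hv x
    rw [iteratedDeriv_succ]
    have h := aux_deriv _ e _ (ih b e v hv) x
    convert h using 1
    funext k
    have h1 : k + 1 + p = k + (p + 1) := by ring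
    rw [h1, Nat.factorial_succ k]
    have : (k.factorial : ℝ) ≠ 0 := by positivity
    push_cast
    field_simp


/-- Lemma 3 of the paper: if `u` is given by an everywhere-convergent power series
with coefficients `a` centered at `c`, and `d = σ - c - τ`, then for every `k` the
series `Σ_{y=k+p}^∞ binom(y, k+p) d^{y-k-p} a_y` converges absolutely, and for all
`t`, `u^{(p)}(t-τ) = Σ_{k=0}^∞ ((k+p)!/k!) (Σ_{y=k+p}^∞ binom(y,k+p) d^{y-k-p} a_y) (t-σ)^k`;
i.e. the Taylor coefficients of `t ↦ u^{(p)}(t-τ)` at `σ` are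
`((k+p)!/k!) Σ_{y=k+p}^∞ binom(y,k+p)(σ-c-τ)^{y-k-p} a_y`. -/
theorem stmt_1 (a : ℕ → ℝ) (c : ℝ) (u : ℝ → ℝ)
    (hu : ∀ t : ℝ, HasSum (fun k : ℕ => a k * (t - c) ^ k) (u t))
    (σ τ : ℝ) (p : ℕ) (d : ℝ) (hd : d = σ - c - τ) :
    (∀ k : ℕ, Summable (fun m : ℕ =>
        |((m + (k + p)).choose (k + p) : ℝ) * d ^ m * a (m + (k + p))|)) ∧
    ∀ t : ℝ,
      HasSum
        (fun k : ℕ => (((k + p).factorial : ℝ) / (k.factorial : ℝ))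
          * (∑' m : ℕ, ((m + (k + p)).choose (k + p) : ℝ) * d ^ m * a (m + (k + p)))
          * (t - σ) ^ k)
        (iteratedDeriv p u (t - τ)) := by
  have ha : ∀ x : ℝ, Summable (fun k : ℕ => a k * x ^ k) := fun x => by
    simpa using (hu (x + c)).summable
  refine ⟨fun k => (aux_inner a ha d (k + p)).abs, fun t => ?_⟩
  have h := aux_iter p (fun k : ℕ => ∑' m : ℕ, ((m + k).choose k : ℝ) * d ^ m * a (m + k))
    (σ - τ) u (fun t => by
      have h := aux_recenter a ha d (t - (σ - τ))
      have h3 : t - (σ - τ) + d = t - c := by rw [hd]; ring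
      rwa [h3, (hu t).tsum_eq] at h) (t - τ)
  have h3 : t - τ - (σ - τ) = t - σ := by ring
  rwa [h3] at h
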